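/- Let ν > 0, x > 0, y > 0 and z ∈ (0,1). Then the series Σ_{k=0}^∞ (k!/Γ(k+ν+1)) L_k^{(ν)}(x) L_k^{(ν)}(y) z^k converges and its sum equals (1/((1−z)(xyz)^{ν/2})) · exp( −z(x+y)/(1−z) ) · I_ν( 2√(xyz)/(1−z) ). -/

import Mathlib

open MeasureTheory Real Set

/-- Pochhammer symbol (rising factorial) `(c)_k = c (c+1) ⋯ (c+k−1)`. -/
noncomputable def poch (c : ℝ) (k : ℕ) : ℝ := (ascPochhammer ℝ k).eval c

/-- Kummer's confluent hypergeometric function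
`M(a,b,z) = ∑_{k=0}^∞ ((a)_k / ((b)_k · k!)) z^k`. -/
noncomputable def kummerM (a b z : ℝ) : ℝ :=
  ∑' k : ℕ, poch a k / (poch b k * (Nat.factorial k : ℝ)) * z ^ k

/-- Generalized Laguerre polynomial `L_k^{(ν)}(x) = ((1+ν)_k / k!) · M(−k, 1+ν, x)`. -/
noncomputable def laguerreL (ν : ℝ) (k : ℕ) (x : ℝ) : ℝ :=
  poch (1 + ν) k / (Nat.factorial k : ℝ) * kummerM (-(k : ℝ)) (1 + ν) x

/-- Modified Bessel function `I_ν(z) = ∑_{m=0}^∞ (z/2)^{2m+ν} / (m! Γ(m+ν+1))`. -/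
noncomputable def besselI (ν z : ℝ) : ℝ :=
  ∑' m : ℕ, (z / 2) ^ (2 * (m : ℝ) + ν) / ((Nat.factorial m : ℝ) * Real.Gamma ((m : ℝ) + ν + 1))

/-! The Laguerre polynomials have the generating function
`∑ L_k(x) z ^ k = (1 - z) ^ (-ν - 1) exp (-x z / (1 - z))`, whose right-hand side keeps its form
under `z ↦ z + w`. Comparing coefficients of `w ^ j` gives
`∑_l (j+l choose j) L_{j+l}(x) z ^ l = (1 - z) ^ (-ν - 1 - j) exp (-x z / (1 - z)) L_j(x / (1 - z))`.
Expanding only `L_k(y)` in powers of `y` and summing over `k` first therefore turns the bilinear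
series, up to a factor, into `∑_j L_j(s) t ^ j / Γ(j + ν + 1)` with `s = x / (1 - z)` and
`t = -y z / (1 - z)`. This is the Cauchy product of `exp t` with the power series of the Bessel
function. -/

open Finset Filter Topology

section DoubleSeries

theorem hasSum_sum_antidiagonal {E : Type*} [AddCommMonoid E] [TopologicalSpace E]
    [ContinuousAdd E] [RegularSpace E] {f : ℕ × ℕ → E} {s : E} (hf : HasSum f s) :
    HasSum (fun n => ∑ p ∈ antidiagonal n, f p) s := by
  refine (HasAntidiagonal.sigmaAntidiagonalEquivProd.hasSum_iff.2 hf).sigma fun n => ?_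
  simpa [Finset.sum_attach] using! hasSum_fintype fun p : antidiagonal n => f p

theorem hasSum_sum_antidiagonal_of_norm_le {E : Type*} [NormedAddCommGroup E] [CompleteSpace E]
    {f : ℕ → ℕ → E} {g : ℕ → ℕ → ℝ} {F : ℕ → E} {G : ℕ → ℝ} {s : E}
    (hfg : ∀ i j, ‖f i j‖ ≤ g i j) (hg : ∀ i, HasSum (g i) (G i)) (hG : Summable G)
    (hf : ∀ i, HasSum (f i) (F i)) (hF : HasSum F s) :
    HasSum (fun n => ∑ p ∈ antidiagonal n, f p.1 p.2) s := by
  have hg_summable : Summable fun p : ℕ × ℕ => g p.1 p.2 := by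
    refine (summable_prod_of_nonneg fun p => (norm_nonneg _).trans (hfg p.1 p.2)).2
      ⟨fun i => (hg i).summable, ?_⟩
    simpa only [(hg _).tsum_eq] using hG
  have hf_hasSum := (hg_summable.of_norm_bounded fun p => hfg p.1 p.2).hasSum
  have hsum := hf_hasSum.prod_fiberwise hf
  rw [hsum.unique hF] at hf_hasSum
  exact hasSum_sum_antidiagonal hf_hasSum

theorem eq_of_eventually_hasSum_mul_pow {𝕜 : Type*} [NontriviallyNormedField 𝕜]
    {a b : ℕ → 𝕜} {f : 𝕜 → 𝕜} (ha : ∀ᶠ w in 𝓝 0, HasSum (fun n => a n * w ^ n) (f w))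
    (hb : ∀ᶠ w in 𝓝 0, HasSum (fun n => b n * w ^ n) (f w)) : a = b := by
  have hasFPowerSeriesAt_ofScalars {c : ℕ → 𝕜}
      (hc : ∀ᶠ w in 𝓝 0, HasSum (fun n => c n * w ^ n) (f w)) :
      HasFPowerSeriesAt f (FormalMultilinearSeries.ofScalars 𝕜 c) 0 := by
    simpa [hasFPowerSeriesAt_iff, FormalMultilinearSeries.coeff_ofScalars, mul_comm] using hc
  have hseries := (hasFPowerSeriesAt_ofScalars ha).eq_formalMultilinearSeries
    (hasFPowerSeriesAt_ofScalars hb)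
  funext n
  simpa only [FormalMultilinearSeries.coeff_ofScalars] using
    congrArg (fun p => p.coeff n) hseries

theorem summable_of_summable_sum_antidiagonal {f : ℕ × ℕ → ℝ} (hf : ∀ p, 0 ≤ f p)
    (hsum : Summable fun n => ∑ p ∈ antidiagonal n, f p) : Summable f := by
  refine HasAntidiagonal.sigmaAntidiagonalEquivProd.summable_iff.1
    ((summable_sigma_of_nonneg fun _ => hf _).2 ⟨fun n => Summable.of_finite, ?_⟩)
  convert hsum using 2 with n
  exact Finset.tsum_subtype (antidiagonal n) f

theorem sum_antidiagonal_choose_mul_pow {R : Type*} [CommSemiring R] (c : ℕ → R) (z w : R)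
    (n : ℕ) :
    ∑ p ∈ antidiagonal n, ((p.1 + p.2).choose p.1 * c (p.1 + p.2) * z ^ p.2) * w ^ p.1 =
      c n * (z + w) ^ n := by
  rw [add_comm z, (Commute.all w z).add_pow', mul_sum]
  refine sum_congr rfl fun p hp => ?_
  rw [mem_antidiagonal.1 hp, nsmul_eq_mul]
  ring

theorem summable_choose_mul_pow_mul_pow {𝕜 : Type*} [NormedField 𝕜] [CompleteSpace 𝕜]
    {c : ℕ → 𝕜} {z w : 𝕜} {ρ : ℝ} (hc : Summable fun n => ‖c n‖ * ρ ^ n)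
    (hzw : ‖z‖ + ‖w‖ ≤ ρ) :
    Summable fun p : ℕ × ℕ =>
      ((p.1 + p.2).choose p.1 * c (p.1 + p.2) * z ^ p.2) * w ^ p.1 := by
  have hbound : Summable fun p : ℕ × ℕ =>
      ((p.1 + p.2).choose p.1 * ‖c (p.1 + p.2)‖ * ‖z‖ ^ p.2) * ‖w‖ ^ p.1 := by
    refine summable_of_summable_sum_antidiagonal (fun p => by positivity) ?_
    simp only [sum_antidiagonal_choose_mul_pow fun n => ‖c n‖]
    refine hc.of_nonneg_of_le (fun n => by positivity) fun n => ?_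
    gcongr
  refine hbound.of_norm_bounded fun p => ?_
  simp only [norm_mul, norm_pow]
  gcongr
  simpa using Nat.norm_cast_le (α := 𝕜) ((p.1 + p.2).choose p.1)

theorem hasSum_choose_mul_pow_of_hasSum_taylor {𝕜 : Type*} [NontriviallyNormedField 𝕜]
    [CompleteSpace 𝕜] {c a : ℕ → 𝕜} {z : 𝕜} {ρ : ℝ}
    (hc : Summable fun n => ‖c n‖ * ρ ^ n) (hz : ‖z‖ < ρ)
    (ha : ∀ᶠ w in 𝓝 0, HasSum (fun j => a j * w ^ j) (∑' n, c n * (z + w) ^ n)) (j : ℕ) :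
    HasSum (fun l => (j + l).choose j * c (j + l) * z ^ l) (a j) := by
  have hρ : 0 < ρ - ‖z‖ := sub_pos.2 hz
  have hrow (j : ℕ) : Summable fun l => (j + l).choose j * c (j + l) * z ^ l := by
    obtain ⟨w, hw_pos, hw_lt⟩ := NormedField.exists_norm_lt 𝕜 hρ
    have hdouble := summable_choose_mul_pow_mul_pow hc (z := z) (w := w) (by linarith)
    exact (summable_mul_right_iff (pow_ne_zero j (norm_pos_iff.1 hw_pos))).1
      (hdouble.prod_factor j)
  have htaylor : ∀ᶠ w in 𝓝 (0 : 𝕜),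
      HasSum (fun j => (∑' l, (j + l).choose j * c (j + l) * z ^ l) * w ^ j)
        (∑' n, c n * (z + w) ^ n) := by
    filter_upwards [Metric.ball_mem_nhds (0 : 𝕜) hρ] with w hw
    have hdouble := (summable_choose_mul_pow_mul_pow hc (z := z) (w := w)
      (by linarith [mem_ball_zero_iff.1 hw])).hasSum
    have hdiag := hasSum_sum_antidiagonal hdouble
    simp only [sum_antidiagonal_choose_mul_pow] at hdiag
    rw [hdiag.tsum_eq]
    exact hdouble.prod_fiberwise fun j => (hrow j).hasSum.mul_right (w ^ j)
  rw [← congrFun (eq_of_eventually_hasSum_mul_pow htaylor ha) j]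
  exact (hrow j).hasSum

end DoubleSeries

section Pochhammer

theorem poch_zero (a : ℝ) : poch a 0 = 1 := by simp [poch]

theorem poch_succ (a : ℝ) (n : ℕ) : poch a (n + 1) = poch a n * (a + n) :=
  ascPochhammer_succ_eval n a

theorem poch_add (a : ℝ) (m n : ℕ) : poch a (m + n) = poch a m * poch (a + m) n := by
  simp [poch, ← ascPochhammer_mul]

theorem poch_pos {a : ℝ} (ha : 0 < a) (n : ℕ) : 0 < poch a n :=
  ascPochhammer_pos n a ha

theorem poch_neg_natCast (k i : ℕ) : poch (-k) i = (-1) ^ i * k.descFactorial i := by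
  rw [poch, ascPochhammer_eval_neg_eq_descPochhammer, descPochhammer_eval_eq_descFactorial]

theorem Gamma_add_natCast {a : ℝ} (ha : ∀ m : ℕ, a ≠ -m) (n : ℕ) :
    Gamma (a + n) = poch a n * Gamma a := by
  induction n with
  | zero => simp [poch_zero]
  | succ n ih =>
    have han : a + n ≠ 0 := fun h => ha n (eq_neg_of_add_eq_zero_left h)
    rw [Nat.cast_succ, ← add_assoc, Gamma_add_one han, ih, poch_succ]
    ring

theorem hasSum_poch_div_factorial_mul_pow (a : ℝ) {z : ℝ} (hz : |z| < 1) :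
    HasSum (fun n : ℕ => poch a n / n.factorial * z ^ n) ((1 - z) ^ (-a)) := by
  have hmem : z ∈ Metric.eball (0 : ℝ) 1 := by
    rw [← ENNReal.ofReal_one, Metric.eball_ofReal]
    simpa using hz
  have hbinomial := (one_div_one_sub_rpow_hasFPowerSeriesOnBall_zero a).hasSum hmem
  rw [zero_add, one_div, ← rpow_neg (by linarith [(abs_lt.1 hz).2])] at hbinomial
  refine hbinomial.congr_fun fun n => ?_
  have hchoose : (n.factorial : ℝ) * Ring.choose (a + n - 1) n = poch a n := by
    rw [poch, ← Polynomial.ascPochhammer_smeval_eq_eval,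
      ← Ring.factorial_nsmul_multichoose_eq_ascPochhammer, nsmul_eq_mul, Ring.choose]
    ring_nf
  rw [FormalMultilinearSeries.ofScalars_apply_eq, ← hchoose, smul_eq_mul]
  field_simp

end Pochhammer

theorem hasSum_pow_div_factorial (t : ℝ) :
    HasSum (fun n : ℕ => t ^ n / n.factorial) (exp t) := by
  rw [exp_eq_exp_ℝ]
  exact NormedSpace.expSeries_div_hasSum_exp t

section BesselClifford

/-- The Bessel–Clifford function `∑ t ^ m / (m! Γ(m + ν + 1))`: the entire factor of the modified
Bessel function, `I_ν(z) = (z / 2) ^ ν` times its value at `(z / 2) ^ 2`. -/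
noncomputable def besselClifford (ν t : ℝ) : ℝ :=
  ∑' m : ℕ, t ^ m / (m.factorial * Gamma (m + ν + 1))

theorem besselI_eq_rpow_mul_besselClifford (ν : ℝ) {z : ℝ} (hz : 0 < z) :
    besselI ν z = (z / 2) ^ ν * besselClifford ν ((z / 2) ^ 2) := by
  rw [besselI, besselClifford, ← tsum_mul_left]
  refine tsum_congr fun m => ?_
  rw [rpow_add (half_pos hz), ← pow_mul, ← rpow_natCast (z / 2) (2 * m)]
  push_cast
  ring

theorem summable_besselClifford {ν : ℝ} (hν : -1 < ν) (t : ℝ) :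
    Summable fun m : ℕ => t ^ m / (m.factorial * Gamma (m + ν + 1)) := by
  refine summable_of_ratio_norm_eventually_le (r := 1 / 2) (by norm_num) ?_
  filter_upwards [eventually_ge_atTop ⌈2 * |t|⌉₊] with m hm
  have hν_pos : 0 < m + ν + 1 := by linarith [m.cast_nonneg (α := ℝ)]
  have hratio : t ^ (m + 1) / ((m + 1).factorial * Gamma ((m + 1 : ℕ) + ν + 1)) =
      t / ((m + 1) * (m + ν + 1)) * (t ^ m / (m.factorial * Gamma (m + ν + 1))) := by
    rw [Nat.factorial_succ, show ((m + 1 : ℕ) : ℝ) + ν + 1 = m + ν + 1 + 1 by push_cast; ring,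
      Gamma_add_one hν_pos.ne', pow_succ']
    push_cast
    field_simp
  have hratio_le : ‖t / ((m + 1) * (m + ν + 1))‖ ≤ 1 / 2 := by
    have ht : 2 * |t| ≤ m := Nat.ceil_le.1 hm
    rw [norm_div, Real.norm_eq_abs, Real.norm_of_nonneg (by positivity),
      div_le_iff₀ (by positivity)]
    nlinarith [m.cast_nonneg (α := ℝ)]
  rw [hratio, norm_mul]
  gcongr

theorem besselI_two_mul_sqrt_div (ν : ℝ) {r t : ℝ} (hr : 0 < r) (ht : 0 < t) :
    besselI ν (2 * √t / r) = t ^ (ν / 2) * r ^ (-ν) * besselClifford ν (t / r ^ 2) := by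
  rw [besselI_eq_rpow_mul_besselClifford ν (by positivity), show 2 * √t / r / 2 = √t / r by ring,
    div_pow, sq_sqrt ht.le, div_rpow (sqrt_nonneg t) hr.le, sqrt_eq_rpow, ← rpow_mul ht.le,
    rpow_neg hr.le]
  ring_nf

end BesselClifford

section Laguerre

variable {ν : ℝ}

theorem laguerreL_eq_sum_antidiagonal (hν : -1 < ν) (k : ℕ) (x : ℝ) :
    laguerreL ν k x = ∑ p ∈ antidiagonal k,
      (-x) ^ p.1 / p.1.factorial * (poch (1 + ν + p.1) p.2 / p.2.factorial) := by
  have hsupport (i : ℕ) (hi : i ∉ range (k + 1)) :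
      poch (-k) i / (poch (1 + ν) i * i.factorial) * x ^ i = 0 := by
    rw [poch_neg_natCast, Nat.descFactorial_eq_zero_iff_lt.2 (by simpa using hi)]
    simp
  rw [laguerreL, kummerM, tsum_eq_sum hsupport, mul_sum,
    ← Nat.sum_antidiagonal_eq_sum_range_succ_mk
      (fun p => poch (1 + ν) k / k.factorial *
        (poch (-k) p.1 / (poch (1 + ν) p.1 * p.1.factorial) * x ^ p.1))]
  refine sum_congr rfl fun p hp => ?_
  obtain rfl := mem_antidiagonal.1 hp
  have hpoch : poch (1 + ν) p.1 ≠ 0 := (poch_pos (by linarith) p.1).ne'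
  have hfactorial := Nat.factorial_mul_descFactorial (Nat.le_add_right p.1 p.2)
  rw [Nat.add_sub_cancel_left] at hfactorial
  rw [poch_neg_natCast, poch_add, ← hfactorial, neg_pow x]
  have hdesc : ((p.1 + p.2).descFactorial p.1 : ℝ) ≠ 0 := by
    exact_mod_cast (Nat.descFactorial_pos.2 (Nat.le_add_right p.1 p.2)).ne'
  push_cast
  field_simp

theorem abs_laguerreL_le (hν : -1 < ν) (k : ℕ) (x : ℝ) :
    |laguerreL ν k x| ≤ laguerreL ν k (-|x|) := by
  rw [laguerreL_eq_sum_antidiagonal hν, laguerreL_eq_sum_antidiagonal hν]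
  refine (abs_sum_le_sum_abs _ _).trans_eq (sum_congr rfl fun p _ => ?_)
  have hpoch := poch_pos (show 0 < 1 + ν + p.1 by linarith [p.1.cast_nonneg (α := ℝ)]) p.2
  simp [abs_mul, abs_div, abs_of_pos hpoch]

theorem laguerreL_div_Gamma_eq_sum_antidiagonal (hν : -1 < ν) (k : ℕ) (x : ℝ) :
    laguerreL ν k x / Gamma (k + ν + 1) = ∑ p ∈ antidiagonal k,
      (-x) ^ p.1 / (p.1.factorial * Gamma (p.1 + ν + 1)) * (1 / p.2.factorial) := by
  rw [laguerreL_eq_sum_antidiagonal hν, sum_div]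
  refine sum_congr rfl fun p hp => ?_
  obtain rfl := mem_antidiagonal.1 hp
  have hpos : 0 < p.1 + ν + 1 := by linarith [p.1.cast_nonneg (α := ℝ)]
  have hGamma : Gamma ((p.1 + p.2 : ℕ) + ν + 1) =
      poch (1 + ν + p.1) p.2 * Gamma (p.1 + ν + 1) := by
    rw [show 1 + ν + p.1 = p.1 + ν + 1 by ring, ← Gamma_add_natCast fun m => by
      linarith [m.cast_nonneg (α := ℝ)]]
    push_cast
    ring_nf
  have hpoch := (poch_pos (show 0 < 1 + ν + p.1 by linarith) p.2).ne'
  rw [hGamma]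
  field_simp

/-- The closed form of the generating function `∑ L_k^{(ν)}(x) z ^ k` of the Laguerre polynomials,
for `|z| < 1`. -/
noncomputable def laguerreGenFun (ν x z : ℝ) : ℝ :=
  (1 - z) ^ (-(ν + 1)) * exp (-(x * z) / (1 - z))

theorem hasSum_laguerreL_mul_pow (hν : -1 < ν) (x : ℝ) {z : ℝ} (hz : |z| < 1) :
    HasSum (fun k => laguerreL ν k x * z ^ k) (laguerreGenFun ν x z) := by
  let term (x z : ℝ) (i p : ℕ) : ℝ :=
    (-(x * z)) ^ i / i.factorial * (poch (1 + ν + i) p / p.factorial * z ^ p)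
  let rowSum (x z : ℝ) (i : ℕ) : ℝ :=
    (1 - z) ^ (-(ν + 1)) * ((-(x * z) / (1 - z)) ^ i / i.factorial)
  have hrow (x : ℝ) {z : ℝ} (hz : |z| < 1) (i : ℕ) : HasSum (term x z i) (rowSum x z i) := by
    have hz1 : 0 < 1 - z := by linarith [(abs_lt.1 hz).2]
    have hvalue : rowSum x z i =
        (-(x * z)) ^ i / i.factorial * (1 - z) ^ (-(1 + ν + i)) := by
      rw [show -(1 + ν + i) = -(ν + 1) - i by ring, rpow_sub_natCast hz1.ne']
      simp only [rowSum, div_pow]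
      ring
    rw [hvalue]
    exact (hasSum_poch_div_factorial_mul_pow (1 + ν + i) hz).mul_left _
  have hrowSum (x z : ℝ) : HasSum (rowSum x z) (laguerreGenFun ν x z) :=
    (hasSum_pow_div_factorial _).mul_left _
  have hnorm (i p : ℕ) : ‖term x z i p‖ ≤ term (-|x|) |z| i p := by
    have hpoch := poch_pos (show 0 < 1 + ν + i by linarith [i.cast_nonneg (α := ℝ)]) p
    simp [term, abs_of_pos hpoch]
  refine (hasSum_sum_antidiagonal_of_norm_le hnorm (hrow (-|x|) (by rwa [abs_abs]))
    (hrowSum _ _).summable (hrow x hz) (hrowSum x z)).congr_fun fun k => ?_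
  rw [laguerreL_eq_sum_antidiagonal hν, sum_mul]
  refine sum_congr rfl fun p hp => ?_
  rw [← mem_antidiagonal.1 hp]
  simp only [term]
  ring

theorem laguerreGenFun_add (ν x : ℝ) {z w : ℝ} (hz : z < 1) (hw : w / (1 - z) < 1) :
    laguerreGenFun ν x (z + w) =
      laguerreGenFun ν x z * laguerreGenFun ν (x / (1 - z)) (w / (1 - z)) := by
  have hz1 : 0 < 1 - z := sub_pos.2 hz
  have hw1 : 0 < 1 - w / (1 - z) := sub_pos.2 hw
  have hfactor : 1 - (z + w) = (1 - z) * (1 - w / (1 - z)) := by field_simp; ring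
  have hexponent : -(x * (z + w)) / (1 - (z + w)) =
      -(x * z) / (1 - z) + -(x / (1 - z) * (w / (1 - z))) / (1 - w / (1 - z)) := by
    have hzw : 1 - z - w ≠ 0 := by
      rw [sub_sub, hfactor]
      positivity
    rw [← sub_sub]
    field_simp
    ring
  simp only [laguerreGenFun]
  rw [hexponent, exp_add, hfactor, mul_rpow hz1.le hw1.le]
  ring

theorem summable_abs_laguerreL_mul_pow (hν : -1 < ν) (x : ℝ) {ρ : ℝ} (hρ : |ρ| < 1) :
    Summable fun k => |laguerreL ν k x| * |ρ| ^ k :=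
  (hasSum_laguerreL_mul_pow hν (-|x|) (by rwa [abs_abs])).summable.of_nonneg_of_le
    (fun k => by positivity)
    fun k => mul_le_mul_of_nonneg_right (abs_laguerreL_le hν k x) (by positivity)

theorem hasSum_choose_mul_laguerreL_mul_pow (hν : -1 < ν) (x : ℝ) {z : ℝ} (hz : |z| < 1)
    (j : ℕ) :
    HasSum (fun l => (j + l).choose j * laguerreL ν (j + l) x * z ^ l)
      (laguerreGenFun ν x z * (laguerreL ν j (x / (1 - z)) / (1 - z) ^ j)) := by
  have hz1 : z < 1 := (abs_lt.1 hz).2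
  obtain ⟨ρ, hzρ, hρ1⟩ := exists_between hz
  have hsummable := summable_abs_laguerreL_mul_pow hν x (ρ := ρ)
    (by rwa [abs_of_pos ((abs_nonneg z).trans_lt hzρ)])
  rw [abs_of_pos ((abs_nonneg z).trans_lt hzρ)] at hsummable
  refine hasSum_choose_mul_pow_of_hasSum_taylor
    (a := fun j => laguerreGenFun ν x z * (laguerreL ν j (x / (1 - z)) / (1 - z) ^ j))
    hsummable hzρ ?_ j
  filter_upwards [Metric.ball_mem_nhds (0 : ℝ) (sub_pos.2 hz)] with w hw
  have hw : |w| < 1 - |z| := by simpa using hw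
  have hzw : |z + w| < 1 := (abs_add_le z w).trans_lt (by linarith)
  have hw1 : |w / (1 - z)| < 1 := by
    rw [abs_div, abs_of_pos (sub_pos.2 hz1), div_lt_one (sub_pos.2 hz1)]
    linarith [le_abs_self z]
  rw [(hasSum_laguerreL_mul_pow hν x hzw).tsum_eq,
    laguerreGenFun_add ν x hz1 (abs_lt.1 hw1).2]
  refine ((hasSum_laguerreL_mul_pow hν (x / (1 - z)) hw1).mul_left _).congr_fun fun j => ?_
  rw [div_pow]
  ring

theorem hasSum_laguerreL_div_Gamma_mul_pow (hν : -1 < ν) (s t : ℝ) :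
    HasSum (fun j : ℕ => laguerreL ν j s / Gamma (j + ν + 1) * t ^ j)
      (exp t * besselClifford ν (-(s * t))) := by
  have hbessel : HasSum (fun m : ℕ => (-(s * t)) ^ m / (m.factorial * Gamma (m + ν + 1)))
      (besselClifford ν (-(s * t))) := (summable_besselClifford hν _).hasSum
  have hexp := hasSum_pow_div_factorial t
  have hprod := hbessel.mul hexp
    (summable_mul_of_summable_norm hbessel.summable.norm hexp.summable.norm)
  rw [mul_comm (exp t)]
  refine (hasSum_sum_antidiagonal hprod).congr_fun fun j => ?_
  rw [laguerreL_div_Gamma_eq_sum_antidiagonal hν, sum_mul]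
  refine sum_congr rfl fun p hp => ?_
  rw [← mem_antidiagonal.1 hp, pow_add, ← neg_mul, mul_pow]
  ring

end Laguerre

section HardyHille

variable {ν : ℝ}

theorem factorial_div_Gamma_mul_laguerreL_eq_sum_antidiagonal (hν : -1 < ν) (k : ℕ) (y : ℝ) :
    k.factorial / Gamma (k + ν + 1) * laguerreL ν k y = ∑ p ∈ antidiagonal k,
      (p.1 + p.2).choose p.1 * ((-y) ^ p.1 / Gamma (p.1 + ν + 1)) := by
  rw [div_mul_comm, laguerreL_div_Gamma_eq_sum_antidiagonal hν, sum_mul]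
  refine sum_congr rfl fun p hp => ?_
  rw [← mem_antidiagonal.1 hp, Nat.cast_add_choose]
  field_simp

/-- The contribution of the power `y ^ j` in `L_{j+l}^{(ν)}(y)` to the term `k = j + l` of the
bilinear series. -/
noncomputable def hardyHilleTerm (ν x y z : ℝ) (j l : ℕ) : ℝ :=
  (-(y * z)) ^ j / Gamma (j + ν + 1) * ((j + l).choose j * laguerreL ν (j + l) x * z ^ l)

theorem sum_antidiagonal_hardyHilleTerm (hν : -1 < ν) (x y z : ℝ) (k : ℕ) :
    ∑ p ∈ antidiagonal k, hardyHilleTerm ν x y z p.1 p.2 =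
      k.factorial / Gamma (k + ν + 1) * laguerreL ν k x * laguerreL ν k y * z ^ k := by
  rw [mul_right_comm _ (laguerreL ν k x),
    factorial_div_Gamma_mul_laguerreL_eq_sum_antidiagonal hν, sum_mul, sum_mul]
  refine sum_congr rfl fun p hp => ?_
  rw [← mem_antidiagonal.1 hp, hardyHilleTerm]
  ring

theorem abs_hardyHilleTerm_le (hν : -1 < ν) (x y z : ℝ) (j l : ℕ) :
    |hardyHilleTerm ν x y z j l| ≤ hardyHilleTerm ν (-|x|) (-|y|) |z| j l := by
  have hGamma : 0 < Gamma (j + ν + 1) :=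
    Gamma_pos_of_pos (by linarith [j.cast_nonneg (α := ℝ)])
  simp only [hardyHilleTerm, abs_mul, abs_div, abs_pow, abs_neg, neg_mul, neg_neg, Nat.abs_cast,
    abs_of_pos hGamma]
  gcongr
  exact abs_laguerreL_le hν _ _

theorem hasSum_hardyHilleTerm (hν : -1 < ν) (x y : ℝ) {z : ℝ} (hz : |z| < 1) (j : ℕ) :
    HasSum (hardyHilleTerm ν x y z j)
      (laguerreGenFun ν x z * (laguerreL ν j (x / (1 - z)) / Gamma (j + ν + 1) *
        (-(y * z) / (1 - z)) ^ j)) := by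
  have hvalue : laguerreGenFun ν x z * (laguerreL ν j (x / (1 - z)) / Gamma (j + ν + 1) *
        (-(y * z) / (1 - z)) ^ j) =
      (-(y * z)) ^ j / Gamma (j + ν + 1) *
        (laguerreGenFun ν x z * (laguerreL ν j (x / (1 - z)) / (1 - z) ^ j)) := by
    rw [div_pow]
    ring
  rw [hvalue]
  exact (hasSum_choose_mul_laguerreL_mul_pow hν x hz j).mul_left _

theorem hasSum_laguerreL_mul_laguerreL_mul_pow (hν : -1 < ν) (x y : ℝ) {z : ℝ}
    (hz : |z| < 1) :
    HasSum (fun k : ℕ =>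
        k.factorial / Gamma (k + ν + 1) * laguerreL ν k x * laguerreL ν k y * z ^ k)
      ((1 - z) ^ (-(ν + 1)) * exp (-(z * (x + y)) / (1 - z)) *
        besselClifford ν (x * y * z / (1 - z) ^ 2)) := by
  have hrowSum (x y z : ℝ) := (hasSum_laguerreL_div_Gamma_mul_pow hν (x / (1 - z))
    (-(y * z) / (1 - z))).mul_left (laguerreGenFun ν x z)
  have hsum := hasSum_sum_antidiagonal_of_norm_le (abs_hardyHilleTerm_le hν x y z)
    (hasSum_hardyHilleTerm hν (-|x|) (-|y|) (by rwa [abs_abs])) (hrowSum _ _ _).summable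
    (hasSum_hardyHilleTerm hν x y hz) (hrowSum x y z)
  simp only [sum_antidiagonal_hardyHilleTerm hν] at hsum
  have hz1 : 1 - z ≠ 0 := by linarith [(abs_lt.1 hz).2]
  have hvalue : laguerreGenFun ν x z * (exp (-(y * z) / (1 - z)) *
        besselClifford ν (-(x / (1 - z) * (-(y * z) / (1 - z))))) =
      (1 - z) ^ (-(ν + 1)) * exp (-(z * (x + y)) / (1 - z)) *
        besselClifford ν (x * y * z / (1 - z) ^ 2) := by
    rw [show -(z * (x + y)) / (1 - z) = -(x * z) / (1 - z) + -(y * z) / (1 - z) by ring, exp_add,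
      show -(x / (1 - z) * (-(y * z) / (1 - z))) = x * y * z / (1 - z) ^ 2 by field_simp,
      laguerreGenFun]
    ring
  rwa [hvalue] at hsum

end HardyHille

theorem laguerre_summation_formula_general {ν x y z : ℝ} (hν : -1 < ν) (hz : |z| < 1)
    (hxyz : 0 < x * y * z) :
    HasSum (fun k : ℕ =>
        k.factorial / Gamma (k + ν + 1) * laguerreL ν k x * laguerreL ν k y * z ^ k)
      (1 / ((1 - z) * (x * y * z) ^ (ν / 2)) * exp (-(z * (x + y)) / (1 - z)) *
        besselI ν (2 * √(x * y * z) / (1 - z))) := by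
  have hz1 : 0 < 1 - z := by linarith [(abs_lt.1 hz).2]
  have hpow : (x * y * z) ^ (ν / 2) ≠ 0 := (rpow_pos_of_pos hxyz _).ne'
  have hvalue : 1 / ((1 - z) * (x * y * z) ^ (ν / 2)) * exp (-(z * (x + y)) / (1 - z)) *
        besselI ν (2 * √(x * y * z) / (1 - z)) =
      (1 - z) ^ (-(ν + 1)) * exp (-(z * (x + y)) / (1 - z)) *
        besselClifford ν (x * y * z / (1 - z) ^ 2) := by
    rw [besselI_two_mul_sqrt_div ν hz1 hxyz, neg_add', rpow_sub_one hz1.ne']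
    generalize (x * y * z) ^ (ν / 2) = c at hpow ⊢
    field_simp
  rw [hvalue]
  exact hasSum_laguerreL_mul_laguerreL_mul_pow hν x y hz

/-- Hardy–Hille summation formula: for `ν, x, y > 0` and `z ∈ (0,1)`, the series
`∑_k (k!/Γ(k+ν+1)) L_k^{(ν)}(x) L_k^{(ν)}(y) z^k` converges, with sum
`(1/((1−z)(xyz)^{ν/2})) exp(−z(x+y)/(1−z)) I_ν(2√(xyz)/(1−z))`. -/
theorem laguerre_summation_formula (ν x y z : ℝ) (hν : 0 < ν) (hx : 0 < x) (hy : 0 < y)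
    (hz : z ∈ Set.Ioo (0 : ℝ) 1) :
    Summable (fun k : ℕ =>
      (Nat.factorial k : ℝ) / Real.Gamma ((k : ℝ) + ν + 1) *
        laguerreL ν k x * laguerreL ν k y * z ^ k) ∧
    ∑' k : ℕ,
        (Nat.factorial k : ℝ) / Real.Gamma ((k : ℝ) + ν + 1) *
          laguerreL ν k x * laguerreL ν k y * z ^ k
      = 1 / ((1 - z) * (x * y * z) ^ (ν / 2)) *
          Real.exp (-(z * (x + y)) / (1 - z)) *
          besselI ν (2 * Real.sqrt (x * y * z) / (1 - z)) := by
  have hsum := laguerre_summation_formula_general (ν := ν) (by linarith)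
    (abs_lt.2 ⟨by linarith [hz.1], hz.2⟩) (mul_pos (mul_pos hx hy) hz.1)
  exact ⟨hsum.summable, hsum.tsum_eq⟩
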